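/- Let F be a real n×n matrix and b ∈ ℝⁿ such that the Kalman controllability matrix M_c = [b, Fb, …, F^{n−1}b] is invertible. Let hᵀ = e_nᵀ M_c^{−1} and let T_c be the n×n matrix whose i-th row is hᵀ F^{i−1} for i = 1, …, n. Then: (i) hᵀ F^{k−1} b = 0 for k = 1, …, n−1 and hᵀ F^{n−1} b = 1; (ii) T_c is invertible; (iii) T_c b = e_n; and (iv) T_c F T_c^{−1} is the companion matrix of the characteristic polynomial of F, i.e., if det(sI − F) = sⁿ + Σ_{i=0}^{n−1} aᵢ sⁱ, then T_c F T_c^{−1} has ones on the superdiagonal, last row (−a₀, −a₁, …, −a_{n−1}), and zeros elsewhere. -/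

import Mathlib

open Matrix Polynomial

/-!
The vector `(h F^m b)_{m < n}` is both `T_c b` and `h M_c`; as `h` is the last row of `M_c⁻¹`, it
equals `e_n`, which is (i) and (iii). The product `T_c M_c` is the Hankel matrix with entries
`h F^(i+j) b`, so by (i) it vanishes above the antidiagonal and has ones on it; hence `T_c` is
invertible. Finally, multiplying `T_c` by `F` on the right shifts its rows up by one, and the
Cayley–Hamilton theorem expresses the new last row `h F^n` through the rows of `T_c`.
-/

section Antitriangular

variable {R : Type*} [CommRing R] {n : ℕ} {A : Matrix (Fin n) (Fin n) R}

theorem det_eq_sign_mul_prod_of_antitriangular (hA : ∀ i j, j < i.rev → A i j = 0) :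
    A.det = (Equiv.Perm.sign (Fin.revPerm : Equiv.Perm (Fin n)) : R) * ∏ i, A i i.rev := by
  have hlower : (A.submatrix id Fin.revPerm).BlockTriangular OrderDual.toDual :=
    fun i j hij => hA i j.rev (Fin.rev_lt_rev.2 hij)
  have hdet := det_of_isLowerTriangular _ hlower
  simp only [det_permute', submatrix_apply, id_eq, Fin.revPerm_apply] at hdet
  rw [← hdet, ← mul_assoc, ← Int.cast_mul, Int.units_coe_mul_self, Int.cast_one, one_mul]

theorem isUnit_of_antitriangular (hA : ∀ i j, j < i.rev → A i j = 0)
    (hunit : ∀ i, IsUnit (A i i.rev)) : IsUnit A := by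
  rw [isUnit_iff_isUnit_det, det_eq_sign_mul_prod_of_antitriangular hA]
  exact ((Equiv.Perm.sign _).isUnit.map (Int.castRingHom R)).mul
    (IsUnit.prod_univ_iff.2 hunit)

end Antitriangular

section Krylov

variable {R ι : Type*} [Semiring R] [Fintype ι] [DecidableEq ι]

/-- The Kalman controllability matrix `[b, F b, …, F^(m-1) b]` with horizon `m`; the classical one
is the square case, where `m` is the dimension of the state space. -/
def controllabilityMatrix (m : ℕ) (F : Matrix ι ι R) (b : ι → R) : Matrix ι (Fin m) R :=
  of fun i j => (F ^ (j : ℕ) *ᵥ b) i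

/-- The observability matrix with rows `h, h F, …, h F^(m-1)`. The transformation `T_c` is the
observability matrix of the last row `h` of the inverse controllability matrix. -/
def observabilityMatrix (m : ℕ) (F : Matrix ι ι R) (h : ι → R) : Matrix (Fin m) ι R :=
  of fun i j => (h ᵥ* F ^ (i : ℕ)) j

theorem observabilityMatrix_mulVec (m : ℕ) (F : Matrix ι ι R) (h b : ι → R) :
    observabilityMatrix m F h *ᵥ b = h ᵥ* controllabilityMatrix m F b :=
  funext fun i => (dotProduct_mulVec h (F ^ (i : ℕ)) b).symm

theorem observabilityMatrix_mul_controllabilityMatrix_apply {p q : ℕ} (F : Matrix ι ι R)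
    (h b : ι → R) (i : Fin p) (j : Fin q) :
    (observabilityMatrix p F h * controllabilityMatrix q F b) i j =
      h ᵥ* F ^ ((i : ℕ) + j) ⬝ᵥ b := by
  rw [pow_add, ← vecMul_vecMul, ← dotProduct_mulVec]
  rfl

end Krylov

section Square

variable {R : Type*} [CommRing R] {n : ℕ} {F : Matrix (Fin n) (Fin n) R} {h b : Fin n → R}

theorem observabilityMatrix_inv_controllabilityMatrix_mulVec
    (hC : IsUnit (controllabilityMatrix n F b)) (i : Fin n) :
    observabilityMatrix n F ((controllabilityMatrix n F b)⁻¹ i) *ᵥ b = Pi.single i 1 := by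
  rw [observabilityMatrix_mulVec, ← mul_apply_eq_vecMul,
    nonsing_inv_mul _ ((isUnit_iff_isUnit_det _).1 hC)]
  exact funext fun _ => one_eq_pi_single

theorem isUnit_observabilityMatrix (hzero : ∀ m < n - 1, h ᵥ* F ^ m ⬝ᵥ b = 0)
    (hunit : IsUnit (h ᵥ* F ^ (n - 1) ⬝ᵥ b)) : IsUnit (observabilityMatrix n F h) := by
  have hHankel : IsUnit (observabilityMatrix n F h * controllabilityMatrix n F b) := by
    refine isUnit_of_antitriangular (fun i j hij => ?_) fun i => ?_
    · rw [observabilityMatrix_mul_controllabilityMatrix_apply]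
      exact hzero _ (by rw [Fin.lt_def, Fin.val_rev] at hij; omega)
    · have hantidiagonal : (i : ℕ) + i.rev = n - 1 := by rw [Fin.val_rev]; omega
      rwa [observabilityMatrix_mul_controllabilityMatrix_apply, hantidiagonal]
  rw [isUnit_iff_isUnit_det, det_mul] at hHankel
  exact (isUnit_iff_isUnit_det _).2 (isUnit_of_mul_isUnit_left hHankel)

end Square

section Companion

variable {R : Type*} {m : ℕ}

/-- The companion matrix of the monic polynomial `X^m + ∑ i < m, a i * X^i`, in the form with ones
on the superdiagonal and the negated coefficients in the last row. -/
def companionMatrix [Ring R] (a : Fin m → R) : Matrix (Fin m) (Fin m) R :=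
  of fun i j => if (i : ℕ) = m - 1 then -a j else if (j : ℕ) = (i : ℕ) + 1 then 1 else 0

theorem companionMatrix_row_last [Ring R] (a : Fin m → R) {i : Fin m} (hi : (i : ℕ) + 1 = m) :
    companionMatrix a i = -a :=
  funext fun _ => if_pos (by omega)

theorem companionMatrix_row_of_lt [Ring R] (a : Fin m → R) {i : Fin m} (hi : (i : ℕ) + 1 < m) :
    companionMatrix a i = Pi.single ⟨i + 1, hi⟩ 1 := by
  funext j
  have hne : (i : ℕ) ≠ m - 1 := by omega
  simp [companionMatrix, hne, Pi.single_apply, Fin.ext_iff]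

theorem pow_eq_neg_sum_smul_pow_of_aeval_eq_zero {A : Type*} [CommSemiring R] [Ring A]
    [Algebra R A] {x : A} {a : Fin m → R} (hx : aeval x (X ^ m + ∑ i, C (a i) * X ^ (i : ℕ)) = 0) :
    x ^ m = -∑ i, a i • x ^ (i : ℕ) := by
  simp only [map_add, map_pow, map_sum, map_mul, aeval_X, aeval_C, ← Algebra.smul_def] at hx
  exact eq_neg_of_add_eq_zero_left hx

theorem vecMul_sum_smul_pow [CommSemiring R] {ι : Type*} [Fintype ι] [DecidableEq ι]
    (F : Matrix ι ι R) (h : ι → R) (a : Fin m → R) :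
    h ᵥ* ∑ i, a i • F ^ (i : ℕ) = a ᵥ* observabilityMatrix m F h := by
  rw [vecMul_eq_sum a, ← vecMulBilin_apply R R, map_sum]
  simp only [map_smul]
  rfl

theorem observabilityMatrix_mul_eq_companionMatrix_mul [CommRing R] {ι : Type*} [Fintype ι]
    [DecidableEq ι] {F : Matrix ι ι R} {a : Fin m → R}
    (hF : aeval F (X ^ m + ∑ i, C (a i) * X ^ (i : ℕ)) = 0) (h : ι → R) :
    observabilityMatrix m F h * F = companionMatrix a * observabilityMatrix m F h := by
  funext i
  have hshift : (observabilityMatrix m F h * F) i = h ᵥ* F ^ ((i : ℕ) + 1) := by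
    rw [pow_succ, ← vecMul_vecMul, mul_apply_eq_vecMul]
    rfl
  rw [hshift, mul_apply_eq_vecMul]
  obtain hlast | hlt : (i : ℕ) + 1 = m ∨ (i : ℕ) + 1 < m := by omega
  · rw [companionMatrix_row_last a hlast, hlast, pow_eq_neg_sum_smul_pow_of_aeval_eq_zero hF,
      vecMul_neg, vecMul_sum_smul_pow, neg_vecMul]
  · rw [companionMatrix_row_of_lt a hlt, single_one_vecMul]
    rfl

end Companion

theorem stmt_8_general {R : Type*} [CommRing R] {n : ℕ} (hn : 0 < n)
    (F : Matrix (Fin n) (Fin n) R) (b : Fin n → R) (hctrb : IsUnit (controllabilityMatrix n F b))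
    (h : Fin n → R) (hh : h = (controllabilityMatrix n F b)⁻¹ ⟨n - 1, Nat.sub_one_lt_of_lt hn⟩) :
    (∀ m : ℕ, m < n - 1 → h ᵥ* F ^ m ⬝ᵥ b = 0) ∧
    h ᵥ* F ^ (n - 1) ⬝ᵥ b = 1 ∧
    IsUnit (observabilityMatrix n F h) ∧
    observabilityMatrix n F h *ᵥ b = Pi.single ⟨n - 1, Nat.sub_one_lt_of_lt hn⟩ 1 ∧
    ∀ a : Fin n → R, F.charpoly = X ^ n + ∑ i : Fin n, C (a i) * X ^ (i : ℕ) →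
      observabilityMatrix n F h * F * (observabilityMatrix n F h)⁻¹ = companionMatrix a := by
  have hmulVec : observabilityMatrix n F h *ᵥ b = Pi.single ⟨n - 1, Nat.sub_one_lt_of_lt hn⟩ 1 :=
    hh ▸ observabilityMatrix_inv_controllabilityMatrix_mulVec hctrb _
  have hzero (m : ℕ) (hm : m < n - 1) : h ᵥ* F ^ m ⬝ᵥ b = 0 :=
    (congrFun hmulVec ⟨m, by omega⟩).trans (Pi.single_eq_of_ne (by simp [hm.ne]) _)
  have hone : h ᵥ* F ^ (n - 1) ⬝ᵥ b = 1 :=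
    (congrFun hmulVec ⟨n - 1, Nat.sub_one_lt_of_lt hn⟩).trans (Pi.single_eq_same _ _)
  have hunit : IsUnit (observabilityMatrix n F h) :=
    isUnit_observabilityMatrix hzero (hone ▸ isUnit_one)
  refine ⟨hzero, hone, hunit, hmulVec, fun a ha => ?_⟩
  have hannihilates : aeval F (X ^ n + ∑ i : Fin n, C (a i) * X ^ (i : ℕ)) = 0 :=
    ha ▸ aeval_self_charpoly F
  rw [observabilityMatrix_mul_eq_companionMatrix_mul hannihilates,
    mul_nonsing_inv_cancel_right _ _ ((isUnit_iff_isUnit_det _).1 hunit)]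

/-- Properties of the transformation `T_c` into controller canonical
form for a controllable pair `(F, b)`:
(i) `hᵀ F^{k-1} b = 0` for `k = 1, …, n-1` and `hᵀ F^{n-1} b = 1`;
(ii) `T_c` is invertible; (iii) `T_c b = e_n`;
(iv) `T_c F T_c⁻¹` is the companion matrix of the characteristic polynomial of `F`. -/
theorem stmt_8 (n : ℕ) (hn : 0 < n) (F : Matrix (Fin n) (Fin n) ℝ) (b : Fin n → ℝ)
    (Mc : Matrix (Fin n) (Fin n) ℝ)
    (hMc : Mc = Matrix.of fun i j : Fin n => (F ^ (j : ℕ)).mulVec b i)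
    (hctrb : IsUnit Mc)
    (h : Fin n → ℝ) (hh : h = Mc⁻¹ ⟨n - 1, by omega⟩)
    (Tc : Matrix (Fin n) (Fin n) ℝ)
    (hTc : Tc = Matrix.of fun i j : Fin n => Matrix.vecMul h (F ^ (i : ℕ)) j) :
    (∀ m : ℕ, m < n - 1 → Matrix.vecMul h (F ^ m) ⬝ᵥ b = 0) ∧
    (Matrix.vecMul h (F ^ (n - 1)) ⬝ᵥ b = 1) ∧
    IsUnit Tc ∧
    (Tc.mulVec b = Pi.single ⟨n - 1, by omega⟩ 1) ∧
    (∀ a : Fin n → ℝ,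
      F.charpoly = X ^ n + ∑ i : Fin n, C (a i) * X ^ (i : ℕ) →
      Tc * F * Tc⁻¹ = Matrix.of fun i j : Fin n =>
        if (i : ℕ) = n - 1 then -a j else if (j : ℕ) = (i : ℕ) + 1 then 1 else 0) := by
  subst hMc hTc
  exact stmt_8_general hn F b hctrb h hh
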